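/- For every k < ω and every finite Souslin measurable colouring c of the set 𝓔_k of all equivalence relations on ω with exactly k equivalence classes, there exists X ∈ 𝓔_∞ (an equivalence relation on ω with infinitely many classes) such that c is constant on 𝓔_k ↾ X, the set of all members of 𝓔_k that are coarsenings of X. -/

import Mathlib

open Set

namespace DualRamsey

/-- `F` is a coarsening of `E` (written `F ≤ E` in the paper): every class of `F`
is a union of classes of `E`. -/
def Coarsens {X : Type*} (F E : Setoid X) : Prop := ∀ a b, E.r a b → F.r a b

/-- The set of equivalence classes of a setoid. -/
def classes {X : Type*} (E : Setoid X) : Set (Set X) := {C | ∃ x, C = {y | E.r x y}}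

/-- The set of minimal representatives of the classes of an equivalence relation on ℕ. -/
def minReps (E : Setoid ℕ) : Set ℕ := {n | ∀ m, E.r n m → n ≤ m}

/-- `pRep E k` is `p_k(E)`, the k-th minimal representative in increasing order. -/
noncomputable def pRep (E : Setoid ℕ) (k : ℕ) : ℕ := Nat.nth (· ∈ minReps E) k

/-- `approx n E` is the n-th approximation `r_n(E)`: `E` restricted to `{0,…,p_n(E)-1}`,
identified with its graph. -/
noncomputable def approx (n : ℕ) (E : Setoid ℕ) : Set (ℕ × ℕ) :=
  {q | q.1 < pRep E n ∧ q.2 < pRep E n ∧ E.r q.1 q.2}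

/-- Basic set `[a, E]` relative to a space `S` of equivalence relations. -/
noncomputable def basicSet (S : Set (Setoid ℕ)) (a : Set (ℕ × ℕ)) (E : ↥S) : Set ↥S :=
  {F | Coarsens F.1 E.1 ∧ ∃ n, approx n F.1 = a}

/-- The Ellentuck topology on a space `S` of equivalence relations. -/
noncomputable def ellentuckTop (S : Set (Setoid ℕ)) : TopologicalSpace ↥S :=
  TopologicalSpace.generateFrom {U | ∃ a E, U = basicSet S a E}

def IsRamsey (S : Set (Setoid ℕ)) (X : Set ↥S) : Prop :=
  ∀ (a : Set (ℕ × ℕ)) (B : ↥S), (basicSet S a B).Nonempty →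
    ∃ A ∈ basicSet S a B, basicSet S a A ⊆ X ∨ basicSet S a A ∩ X = ∅

def IsRamseyNull (S : Set (Setoid ℕ)) (X : Set ↥S) : Prop :=
  ∀ (a : Set (ℕ × ℕ)) (B : ↥S), (basicSet S a B).Nonempty →
    ∃ A ∈ basicSet S a B, basicSet S a A ∩ X = ∅

/-- The property of Baire with respect to the Ellentuck topology. -/
noncomputable def HasBP (S : Set (Setoid ℕ)) (X : Set ↥S) : Prop :=
  ∃ O M : Set ↥S, (ellentuckTop S).IsOpen O ∧ @IsMeagre _ (ellentuckTop S) M ∧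
    X = (O \ M) ∪ (M \ O)

/-- The Souslin operation applied to a scheme indexed by finite sequences of naturals. -/
def souslinOp {X : Type*} (A : List ℕ → Set X) : Set X :=
  ⋃ x : ℕ → ℕ, ⋂ n : ℕ, A ((List.range n).map x)

/-- `Y` belongs to the smallest field of sets containing all `t`-open sets and
closed under the Souslin operation. -/
def SouslinMeasurable {X : Type*} (t : TopologicalSpace X) (Y : Set X) : Prop :=
  ∀ 𝒜 : Set (Set X),
    (∀ U, t.IsOpen U → U ∈ 𝒜) →
    (∀ A ∈ 𝒜, Aᶜ ∈ 𝒜) →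
    (∀ A ∈ 𝒜, ∀ B ∈ 𝒜, A ∪ B ∈ 𝒜) →
    (∀ f : List ℕ → Set X, (∀ s, f s ∈ 𝒜) → souslinOp f ∈ 𝒜) →
    Y ∈ 𝒜

/-- The graph of an equivalence relation as a boolean-valued function. -/
noncomputable def graphMap {X : Type*} (E : Setoid X) : X × X → Bool :=
  fun q => @decide (E.r q.1 q.2) (Classical.dec _)

/-- The metrizable topology on a space of equivalence relations, as a subspace of
`2^(X × X)` via graphs. -/
noncomputable def graphTop {X : Type*} (S : Set (Setoid X)) : TopologicalSpace ↥S :=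
  TopologicalSpace.induced (fun E => graphMap E.1) inferInstance



/-- `𝓔_k`: equivalence relations on ℕ with exactly `k` classes. -/
def Ek (k : ℕ) : Set (Setoid ℕ) := {E | (classes E).Finite ∧ (classes E).ncard = k}

/-- `𝓔_∞`: equivalence relations on ℕ with infinitely many classes. -/
def Einf : Set (Setoid ℕ) := {E | (classes E).Infinite}

/-!
An equivalence relation with `k` classes is the kernel of a unique rigid surjection `f` from `ℕ`
onto `Fin k`: the values of `f` make their first appearance in increasing order. The coarsenings
of `ker X` with `k` classes are then the kernels of the maps `f ∘ X`, so one has to find a rigid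
surjection `X : ℕ → ℕ` such that the colour of `f ∘ X` does not depend on `f`.

Baire category reduces the colour of `f ∘ X` to finitely many letters. Souslin measurable
colourings have the property of Baire, and `X` can be built so slowly that `f ∘ X` is generic for
each surjective `f` and its colour is decided as soon as `f` has taken all its values. What
remains is a colouring of the words `f 0, f 1, …, f (n - 1)` that exhaust all letters but the last.

For words the induction on the number of letters rests on minimal idempotent ultrafilters `q n` on
the semigroups of words over `{0, …, n}`, each `q (n + 1)` being a left multiple of `q n`. If `f`
maps the letter `n + 1` to the same value as a smaller letter, then the image of `q (n + 1)` under
`f` is absorbed by that of `q n`. A word chosen generically for these ultrafilters therefore has a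
colour that changes only when `f` takes a new value.
-/

open Filter Topology

section CompactSemigroup

variable {M : Type*} [Semigroup M] [TopologicalSpace M] [CompactSpace M] [T2Space M]

theorem exists_forall_exists_mul_mul_eq [Nonempty M] (hcont : ∀ r : M, Continuous (· * r)) :
    ∃ x : M, ∀ z, ∃ c, c * z * x = x := by
  -- `M * x` is a minimal left ideal.
  obtain ⟨x, hx⟩ := exists_maximal_of_nonempty_chains_bounded
    (r := fun x y : M => ∃ c, c * x = y) (fun C hC hne => by
      have hdir : Directed (· ⊇ ·) fun a : C => range (· * a.1) :=
        IsChain.directed (f := fun a : M => range (· * a)) <| hC.mono_rel <| by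
          rintro a _ ⟨c, rfl⟩ _ ⟨d, rfl⟩
          exact ⟨d * c, mul_assoc ..⟩
      have := hne.to_subtype
      obtain ⟨y, hy⟩ := IsCompact.nonempty_iInter_of_directed_nonempty_isCompact_isClosed _ hdir
        (fun a => ⟨_, a, rfl⟩) (fun a => isCompact_range (hcont a))
        (fun a => (isCompact_range (hcont a)).isClosed)
      exact ⟨y, fun a ha => mem_iInter.mp hy ⟨a, ha⟩⟩)
    (by rintro a _ _ ⟨c, rfl⟩ ⟨d, rfl⟩; exact ⟨d * c, mul_assoc ..⟩)
  exact ⟨x, fun z => by simpa only [mul_assoc] using hx (z * x) ⟨z, rfl⟩⟩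

theorem exists_minimal_idempotent (hcont : ∀ r : M, Continuous (· * r)) {L : Set M}
    (hL : IsClosed L) (hne : L.Nonempty) (hmul : ∀ x ∈ L, ∀ y, x * y ∈ L) (r : M) :
    ∃ q ∈ L, q * q = q ∧ (∃ z, z * r = q) ∧ ∀ z, ∃ c, c * z * q = q := by
  have : Nonempty M := ⟨r⟩
  obtain ⟨x, hx⟩ := exists_forall_exists_mul_mul_eq hcont
  obtain ⟨_, ⟨v, hv, rfl⟩, hidem⟩ := exists_idempotent_in_compact_subsemigroup hcont
    ((· * (x * r)) '' L) (hne.image _) (hL.isCompact.image (hcont _)) (by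
      rintro _ ⟨v, hv, rfl⟩ _ ⟨w, -, rfl⟩
      exact ⟨v * (x * r) * w, hmul _ (hmul v hv _) _, by simp only [mul_assoc]⟩)
  refine ⟨v * (x * r), hmul v hv _, hidem, ⟨v * x, mul_assoc ..⟩, fun z => ?_⟩
  obtain ⟨c, hc⟩ := hx (z * v)
  exact ⟨v * c, calc
    v * c * z * (v * (x * r)) = v * (c * (z * v) * x * r) := by simp only [mul_assoc]
    _ = v * (x * r) := by rw [hc]⟩

end CompactSemigroup

section Ultrafilters

attribute [local instance] Ultrafilter.mul Ultrafilter.semigroup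

theorem ultrafilter_map_mul {F M N : Type*} [Mul M] [Mul N] [FunLike F M N] [MulHomClass F M N]
    (φ : F) (U V : Ultrafilter M) :
    (U * V).map φ = U.map φ * V.map φ :=
  Ultrafilter.coe_inj.mp <| Filter.ext' fun p => by
    simp only [Ultrafilter.coe_map, eventually_map, Ultrafilter.eventually_mul, map_mul]

/-- The subsemigroup of the ultrafilters on `M` that concentrate on a subsemigroup of `M`. -/
def ultrafiltersOn {M : Type*} [Semigroup M] (N : Subsemigroup M) :
    Subsemigroup (Ultrafilter M) where
  carrier := {U | ∀ᶠ w in U, w ∈ N}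
  mul_mem' {U V} hU hV := by
    filter_upwards [hU] with u hu
    filter_upwards [hV] with v hv
    exact mul_mem hu hv

theorem ultrafiltersOn_mono {M : Type*} [Semigroup M] :
    Monotone (ultrafiltersOn : Subsemigroup M → Subsemigroup (Ultrafilter M)) :=
  fun _ _ h _ hU => hU.mono h

theorem exists_minimal_idempotent_ultrafilter {M : Type*} [Semigroup M] {N : Subsemigroup M}
    {w : M} (hw : w ∈ N) {r : Ultrafilter M} (hr : r ∈ ultrafiltersOn N) :
    ∃ q ∈ ultrafiltersOn N, (∀ᶠ u in q, ∃ v, u = w * v) ∧ q * q = q ∧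
      (∃ z ∈ ultrafiltersOn N, z * r = q) ∧
      ∀ z ∈ ultrafiltersOn N, ∃ c ∈ ultrafiltersOn N, c * z * q = q := by
  have hclosed : IsClosed (ultrafiltersOn N : Set (Ultrafilter M)) := ultrafilter_isClosed_basic _
  have := isCompact_iff_compactSpace.mp hclosed.isCompact
  let L : Set (ultrafiltersOn N) := {q | ∀ᶠ u in q.1, ∃ v, u = w * v}
  have hL : IsClosed L := (ultrafilter_isClosed_basic _).preimage continuous_subtype_val
  have hne : L.Nonempty := ⟨⟨pure (w * w), mul_mem hw hw⟩, w, rfl⟩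
  have hmul : ∀ x ∈ L, ∀ y, x * y ∈ L := fun x hx y => by
    refine Eventually.mono hx fun u hu => Eventually.of_forall fun u' => ?_
    obtain ⟨v, rfl⟩ := hu
    exact ⟨v * u', mul_assoc ..⟩
  have hcont (s : ultrafiltersOn N) : Continuous (· * s) :=
    ((Ultrafilter.continuous_mul_left s.1).comp continuous_subtype_val).subtype_mk _
  obtain ⟨q, hqL, hidem, hz, hmin⟩ := exists_minimal_idempotent hcont hL hne hmul ⟨r, hr⟩
  simp only [Subtype.ext_iff, Subtype.exists, Subtype.forall, MulMemClass.coe_mul,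
    exists_prop] at hidem hz hmin
  exact ⟨q, q.2, hqL, hidem, hz, hmin⟩

theorem exists_eventually_eq {M κ : Type*} [Finite κ] (φ : M → κ) (U : Ultrafilter M) :
    ∃ i, ∀ᶠ t in U, φ t = i := by
  obtain ⟨i, hi⟩ := (U.map φ).eq_pure_of_finite
  exact ⟨i, show {i} ∈ U.map φ by rw [hi]; exact rfl⟩

/-- The colour that `φ` gives to `w * t` for `U`-almost all `t`. -/
noncomputable def tailColour {M κ : Type*} [Mul M] [Finite κ] (φ : M → κ) (w : M)
    (U : Ultrafilter M) : κ :=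
  (exists_eventually_eq (fun t => φ (w * t)) U).choose

theorem eventually_eq_tailColour {M κ : Type*} [Mul M] [Finite κ] (φ : M → κ) (w : M)
    (U : Ultrafilter M) : ∀ᶠ t in U, φ (w * t) = tailColour φ w U :=
  (exists_eventually_eq (fun t => φ (w * t)) U).choose_spec

theorem eventually_tailColour_eq {M κ : Type*} [Semigroup M] [Finite κ] (φ : M → κ) (w : M)
    (U V : Ultrafilter M) : ∀ᶠ s in U, tailColour φ (w * s) V = tailColour φ w (U * V) := by
  filter_upwards [(Ultrafilter.eventually_mul U V _).mp (eventually_eq_tailColour φ w (U * V))]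
    with s hs
  obtain ⟨t, ht, ht'⟩ := (hs.and (eventually_eq_tailColour φ (w * s) V)).exists
  rw [← ht', ← ht, mul_assoc]

/-- The words over the alphabet `{0, …, n}`. -/
def wordsIic (n : ℕ) : Subsemigroup (FreeMonoid ℕ) where
  carrier := {w | ∀ a ∈ w, a ≤ n}
  mul_mem' hu hv a ha := (FreeMonoid.mem_mul.mp ha).elim (hu a) (hv a)

theorem wordsIic_mono : Monotone wordsIic := fun _ _ h _ hw a ha => (hw a ha).trans h

/-- An idempotent ultrafilter `q` on the words over `{0, …, n}` that concentrates on the words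
beginning with `n` and is minimal: every `z * q` can be brought back to `q`. -/
structure IsAnchor (n : ℕ) (q : Ultrafilter (FreeMonoid ℕ)) : Prop where
  mem : q ∈ ultrafiltersOn (wordsIic n)
  eventually_starts : ∀ᶠ w in q, ∃ v, w = FreeMonoid.of n * v
  idem : q * q = q
  exists_mul_mul_eq : ∀ z ∈ ultrafiltersOn (wordsIic n),
    ∃ c ∈ ultrafiltersOn (wordsIic n), c * z * q = q

theorem exists_isAnchor {n : ℕ} {r : Ultrafilter (FreeMonoid ℕ)}
    (hr : r ∈ ultrafiltersOn (wordsIic n)) :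
    ∃ q, IsAnchor n q ∧ ∃ z ∈ ultrafiltersOn (wordsIic n), z * r = q := by
  have hn : FreeMonoid.of n ∈ wordsIic n := fun a ha => (FreeMonoid.mem_of.mp ha).le
  obtain ⟨q, hq, hstart, hidem, hz, hmin⟩ := exists_minimal_idempotent_ultrafilter hn hr
  exact ⟨q, ⟨hq, hstart, hidem, hmin⟩, hz⟩

theorem exists_isAnchor_seq : ∃ q : ℕ → Ultrafilter (FreeMonoid ℕ), ∀ n, IsAnchor n (q n) ∧
    ∃ z ∈ ultrafiltersOn (wordsIic (n + 1)), z * q n = q (n + 1) := by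
  obtain ⟨q₀, hq₀, -⟩ := exists_isAnchor (n := 0) (r := pure (FreeMonoid.of 0))
    (show FreeMonoid.of 0 ∈ wordsIic 0 from fun a ha => (FreeMonoid.mem_of.mp ha).le)
  have step (n : ℕ) (r : {q // IsAnchor n q}) : ∃ q : {q // IsAnchor (n + 1) q},
      ∃ z ∈ ultrafiltersOn (wordsIic (n + 1)), z * r.1 = q.1 := by
    obtain ⟨q, hq, hz⟩ :=
      exists_isAnchor (ultrafiltersOn_mono (wordsIic_mono n.le_succ) r.2.mem)
    exact ⟨⟨q, hq⟩, hz⟩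
  choose next hnext using step
  let q (n : ℕ) : {q // IsAnchor n q} := Nat.rec ⟨q₀, hq₀⟩ next n
  exact ⟨fun n => (q n).1, fun n => ⟨(q n).2, hnext n (q n)⟩⟩

/-- Replacing the letter `n + 1` by a letter `i ≤ n` with the same image turns the factor between
`q` and `q'` into an ultrafilter which the minimality of `q` allows us to cancel. -/
theorem IsAnchor.map_mul_map_eq {A : Type*} {n : ℕ} {q q' : Ultrafilter (FreeMonoid ℕ)}
    (hq : IsAnchor n q) (hq' : q' * q' = q')
    (hz : ∃ z ∈ ultrafiltersOn (wordsIic (n + 1)), z * q = q') {f : ℕ → A}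
    (hf : f (n + 1) ∈ f '' Iic n) :
    q.map (FreeMonoid.map f) * q'.map (FreeMonoid.map f) = q.map (FreeMonoid.map f) := by
  obtain ⟨z, hz, hzq⟩ := hz
  obtain ⟨i, hi, hfi⟩ := hf
  let ρ (a : ℕ) : ℕ := if a ≤ n then a else i
  have hρ (a : ℕ) : ρ a ≤ n := by grind
  have hρz : z.map (FreeMonoid.map ρ) ∈ ultrafiltersOn (wordsIic n) :=
    Eventually.of_forall (f := (z : Filter (FreeMonoid ℕ))) fun w a ha => by
      obtain ⟨b, -, rfl⟩ := FreeMonoid.mem_map.mp ha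
      exact hρ b
  have hfρ : (z.map (FreeMonoid.map ρ)).map (FreeMonoid.map f) = z.map (FreeMonoid.map f) := by
    rw [Ultrafilter.map_map]
    refine Ultrafilter.coe_inj.mp <| Filter.map_congr ?_
    filter_upwards [hz] with w hw
    refine FreeMonoid.map_map.trans (List.map_congr_left fun a ha => ?_)
    have := hw a ha
    grind
  obtain ⟨c, -, hc⟩ := hq.exists_mul_mul_eq _ hρz
  have hfactor : q.map (FreeMonoid.map f) =
      c.map (FreeMonoid.map f) * q'.map (FreeMonoid.map f) := by
    conv_lhs => rw [← hc]
    rw [← hzq]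
    simp only [ultrafilter_map_mul, hfρ, mul_assoc]
  rw [hfactor, mul_assoc, ← ultrafilter_map_mul, hq']

end Ultrafilters

section RigidSurjections

/-- A surjection of `ℕ` onto itself under which the values `0, 1, 2, …` make their first appearance
in this order. Such maps stand for the equivalence relations with infinitely many classes: each of
these is the kernel of exactly one of them. -/
structure RigidSurj where
  /-- The underlying map. -/
  toFun : ℕ → ℕ
  /-- The position of the first appearance of a value. -/
  first : ℕ → ℕ
  toFun_first (n : ℕ) : toFun (first n) = n
  lt_of_lt_first {n i : ℕ} (h : i < first n) : toFun i < n

/-- A map into an ordered type is rigid if every value is preceded by all smaller values. -/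
def Rigid {A : Type*} [LT A] (f : ℕ → A) : Prop := ∀ i, ∀ a < f i, ∃ i' < i, f i' = a

namespace RigidSurj

instance : CoeFun RigidSurj fun _ => ℕ → ℕ := ⟨toFun⟩

theorem apply_first (X : RigidSurj) (n : ℕ) : X (X.first n) = n := X.toFun_first n

theorem surjective (X : RigidSurj) : Function.Surjective X := fun n => ⟨_, X.apply_first n⟩

theorem lt_of_lt (X : RigidSurj) {n i : ℕ} (h : i < X.first n) : X i < n := X.lt_of_lt_first h

theorem first_apply_le (X : RigidSurj) (i : ℕ) : X.first (X i) ≤ i :=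
  not_lt.mp fun h => (X.lt_of_lt h).false

theorem first_strictMono (X : RigidSurj) : StrictMono X.first := fun a b hab => by
  by_contra! hle
  obtain hlt | heq := hle.lt_or_eq
  · exact hab.not_gt (X.apply_first b ▸ X.lt_of_lt hlt)
  · exact hab.ne' (X.apply_first b ▸ heq ▸ X.apply_first a)

/-- The identity as a rigid surjection. -/
protected def id : RigidSurj where
  toFun n := n
  first n := n
  toFun_first _ := rfl
  lt_of_lt_first h := h

/-- The rigid surjection that first applies `X` and then `Y`. -/
def comp (Y X : RigidSurj) : RigidSurj where
  toFun := Y ∘ X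
  first := X.first ∘ Y.first
  toFun_first n := by simp only [Function.comp_apply, apply_first]
  lt_of_lt_first h := Y.lt_of_lt (X.lt_of_lt h)

/-- The values of `X` before the first appearance of `n`. -/
def word (X : RigidSurj) (n : ℕ) : List ℕ := (List.range (X.first n)).map X

theorem lt_of_mem_word (X : RigidSurj) (n : ℕ) : ∀ a ∈ X.word n, a < n := by
  simpa [word] using fun i => X.lt_of_lt (n := n) (i := i)

theorem word_comp (X Y : RigidSurj) (n : ℕ) :
    (Y.comp X).word n = (X.word (Y.first n)).map Y := by
  rw [word, word, List.map_map]
  rfl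

theorem image_Iio_first (X : RigidSurj) (n : ℕ) : X '' Iio (X.first n) = Iio n := by
  refine Subset.antisymm (image_subset_iff.mpr fun i hi => X.lt_of_lt hi) fun a ha => ?_
  exact ⟨X.first a, X.first_strictMono ha, X.apply_first a⟩

end RigidSurj

theorem Rigid.comp {A : Type*} [LT A] {f : ℕ → A} (hf : Rigid f) (X : RigidSurj) :
    Rigid (f ∘ X) := fun i a ha => by
  obtain ⟨i', hi', rfl⟩ := hf (X i) a ha
  exact ⟨X.first i', (X.first_strictMono hi').trans_le (X.first_apply_le i),
    congrArg f (X.apply_first i')⟩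

theorem Rigid.exists_image_Iio_eq {A : Type*} [LinearOrder A] {f : ℕ → A} (hf : Rigid f) (i : ℕ) :
    ∃ n, f n = f i ∧ f '' Iio n = Iio (f i) := by
  classical
  have hex : ∃ n, f n = f i := ⟨i, rfl⟩
  refine ⟨Nat.find hex, Nat.find_spec hex, Subset.antisymm ?_ fun a ha => ?_⟩
  · rintro _ ⟨m, hm, rfl⟩
    refine (not_lt.mp fun hlt => ?_).lt_of_ne (Nat.find_min hex hm)
    obtain ⟨m', hm', heq⟩ := hf m _ hlt
    exact Nat.find_min hex (hm'.trans hm) heq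
  · exact hf _ a (ha.trans_eq (Nat.find_spec hex).symm)

theorem exists_forall_map_range_eq {A : Type*} {W : ℕ → List A} (hW : ∀ n, W n <+: W (n + 1))
    (hlen : ∀ n, n ≤ (W n).length) :
    ∃ x : ℕ → A, ∀ n, (List.range (W n).length).map x = W n := by
  have hmono {n m : ℕ} (h : n ≤ m) : W n <+: W m :=
    Nat.rel_of_forall_rel_succ_of_le (· <+: ·) hW h
  refine ⟨fun n => (W (n + 1))[n]'(hlen (n + 1)), fun n => List.ext_getElem (by simp) ?_⟩
  intro i _ hi
  simp only [List.getElem_map, List.getElem_range]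
  obtain h | h := le_total n (i + 1)
  · exact ((hmono h).getElem hi).symm
  · exact (hmono h).getElem (hlen (i + 1))

theorem exists_rigidSurj_forall_word {R : ℕ → List ℕ → List ℕ → Prop}
    (hR : ∀ n w, (∀ a ∈ w, a < n) → ∃ v, (∀ a ∈ v, a ≤ n) ∧ R n w (w ++ n :: v)) :
    ∃ X : RigidSurj, ∀ n, R n (X.word n) (X.word (n + 1)) := by
  choose! V hV hRV using hR
  let W (n : ℕ) : List ℕ := Nat.rec [] (fun n w => w ++ n :: V n w) n
  have hsucc (n : ℕ) : W (n + 1) = W n ++ n :: V n (W n) := rfl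
  have hlt (n : ℕ) : ∀ a ∈ W n, a < n := by
    induction n with
    | zero => exact fun _ h => absurd h List.not_mem_nil
    | succ n ih =>
      have := hV n _ ih
      grind
  have hlen (n : ℕ) : n ≤ (W n).length := by
    induction n <;> grind
  obtain ⟨x, hx⟩ := exists_forall_map_range_eq (W := W) (fun n => ⟨_, (hsucc n).symm⟩) hlen
  let X : RigidSurj :=
    { toFun := x
      first := fun n => (W n).length
      toFun_first := fun n => by
        simpa [hsucc] using congrArg (·[(W n).length]?) (hx (n + 1))
      lt_of_lt_first := fun {n i} h => hlt n _ <| by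
        rw [← hx n]
        exact List.mem_map_of_mem (List.mem_range.mpr h) }
  refine ⟨X, fun n => ?_⟩
  convert hRV n _ (hlt n)
  · exact hx n
  · exact hx (n + 1)

theorem eventually_forall_exists_eqOn {A T : Type*} [Finite A] {l : Filter T}
    {P : T → (ℕ → A) → Prop} (hP : ∀ f, ∀ᶠ t in l, P t f) (n : ℕ) :
    ∀ᶠ t in l, ∀ f, ∃ f', EqOn f f' (Iic n) ∧ P t f' := by
  have hfin : ∀ᶠ t in l, ∀ g : Iic n → A, P t (IicExtend g) := eventually_all.mpr fun g => hP _
  filter_upwards [hfin] with t ht f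
  exact ⟨_, fun i hi => (IicExtend_of_mem (fun i : Iic n => f i) hi).symm, ht _⟩

end RigidSurjections

section WordTheorem

attribute [local instance] Ultrafilter.mul Ultrafilter.semigroup

variable {A κ : Type*} [Finite κ]

/-- The colour under `c` of the `f`-image of almost every continuation `w ++ t` of `w`, where
almost every `t` is meant in the sense of `q`. -/
noncomputable def continuationColour (c : List A → κ) (q : Ultrafilter (FreeMonoid ℕ))
    (w : List ℕ) (f : ℕ → A) : κ :=
  tailColour (c ∘ FreeMonoid.toList) (FreeMonoid.ofList (w.map f)) (q.map (FreeMonoid.map f))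

theorem eventually_eq_continuationColour (c : List A → κ) (q : Ultrafilter (FreeMonoid ℕ))
    (w : List ℕ) (f : ℕ → A) :
    ∀ᶠ t in q, c ((w ++ FreeMonoid.toList t).map f) = continuationColour c q w f := by
  filter_upwards [eventually_map.mp (eventually_eq_tailColour (c ∘ FreeMonoid.toList)
    (FreeMonoid.ofList (w.map f)) (q.map (FreeMonoid.map f)))] with t ht
  rw [continuationColour, ← ht, List.map_append]
  rfl

theorem eventually_continuationColour_eq (c : List A → κ) {q q' : Ultrafilter (FreeMonoid ℕ)}
    (w : List ℕ) {f : ℕ → A}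
    (hf : q.map (FreeMonoid.map f) * q'.map (FreeMonoid.map f) = q.map (FreeMonoid.map f)) :
    ∀ᶠ t in q,
      continuationColour c q' (w ++ FreeMonoid.toList t) f = continuationColour c q w f := by
  filter_upwards [eventually_map.mp (eventually_tailColour_eq (c ∘ FreeMonoid.toList)
    (FreeMonoid.ofList (w.map f)) (q.map (FreeMonoid.map f)) (q'.map (FreeMonoid.map f)))]
    with t ht
  rw [hf] at ht
  rw [continuationColour, continuationColour, ← ht, List.map_append]
  rfl

theorem map_congr_of_eqOn_Iic {n : ℕ} {f f' : ℕ → A} (h : EqOn f f' (Iic n)) {w : List ℕ}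
    (hw : ∀ a ∈ w, a ≤ n) : w.map f = w.map f' :=
  List.map_congr_left fun a ha => h (hw a ha)

theorem continuationColour_congr (c : List A → κ) {q : Ultrafilter (FreeMonoid ℕ)} {n : ℕ}
    (hq : q ∈ ultrafiltersOn (wordsIic n)) {w : List ℕ} (hw : ∀ a ∈ w, a ≤ n) {f f' : ℕ → A}
    (h : EqOn f f' (Iic n)) : continuationColour c q w f = continuationColour c q w f' := by
  have hmap : q.map (FreeMonoid.map f) = q.map (FreeMonoid.map f') :=
    Ultrafilter.coe_inj.mp <| Filter.map_congr <| hq.mono fun _ => map_congr_of_eqOn_Iic h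
  rw [continuationColour, continuationColour, map_congr_of_eqOn_Iic h hw, hmap]

theorem exists_continuation [Finite A] (c : List A → κ) {n : ℕ}
    {q q' : Ultrafilter (FreeMonoid ℕ)} (hq : IsAnchor n q) (hq' : IsAnchor (n + 1) q')
    (hz : ∃ z ∈ ultrafiltersOn (wordsIic (n + 1)), z * q = q') {w : List ℕ}
    (hw : ∀ a ∈ w, a < n) :
    ∃ v, (∀ a ∈ v, a ≤ n) ∧ ∀ f : ℕ → A,
      c ((w ++ n :: v).map f) = continuationColour c q w f ∧
      (f (n + 1) ∈ f '' Iic n →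
        continuationColour c q' (w ++ n :: v) f = continuationColour c q w f) := by
  have hgood (f : ℕ → A) : ∀ᶠ t in q,
      c ((w ++ FreeMonoid.toList t).map f) = continuationColour c q w f ∧
      (f (n + 1) ∈ f '' Iic n →
        continuationColour c q' (w ++ FreeMonoid.toList t) f = continuationColour c q w f) :=
    (eventually_eq_continuationColour c q w f).and <| eventually_imp_distrib_left.mpr fun hf =>
      eventually_continuationColour_eq c w (hq.map_mul_map_eq hq'.idem hz hf)
  obtain ⟨_, ⟨hvn, v, rfl⟩, hv⟩ := ((hq.mem.and hq.eventually_starts).and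
    (eventually_forall_exists_eqOn hgood (n + 1))).exists
  have hwv : ∀ a ∈ w ++ n :: FreeMonoid.toList v, a ≤ n := fun a ha =>
    (List.mem_append.mp ha).elim (fun h => (hw a h).le) (hvn a)
  refine ⟨FreeMonoid.toList v, fun a ha => hvn a (List.mem_cons_of_mem n ha), fun f => ?_⟩
  obtain ⟨f', hff', hcol, habs⟩ := hv f
  have hff'n : EqOn f f' (Iic n) := hff'.mono (Iic_subset_Iic.mpr n.le_succ)
  rw [map_congr_of_eqOn_Iic hff'n hwv,
    continuationColour_congr c hq.mem (fun a h => (hw a h).le) hff'n,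
    continuationColour_congr c hq'.mem (fun a h => (hwv a h).trans n.le_succ) hff',
    hff' self_mem_Iic, hff'n.image_eq]
  exact ⟨hcol, habs⟩

theorem exists_rigidSurj_stabilizing [Finite A] (c : List A → κ) :
    ∃ X : RigidSurj, ∀ {n m m' : ℕ} {f g : ℕ → A}, n < m → n < m' → EqOn f g (Iic n) →
      f '' Iio m ⊆ f '' Iic n → g '' Iio m' ⊆ g '' Iic n →
      c ((X.word m).map f) = c ((X.word m').map g) := by
  obtain ⟨q, hq⟩ := exists_isAnchor_seq
  obtain ⟨X, hX⟩ := exists_rigidSurj_forall_word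
    (R := fun n w w' => ∀ f, c (w'.map f) = continuationColour c (q n) w f ∧
      (f (n + 1) ∈ f '' Iic n →
        continuationColour c (q (n + 1)) w' f = continuationColour c (q n) w f))
    fun n w hw => exists_continuation c (hq n).1 (hq (n + 1)).1 (hq n).2 hw
  let e n f := continuationColour c (q n) (X.word n) f
  have hcolour {n m : ℕ} {f : ℕ → A} (hnm : n < m) (hf : f '' Iio m ⊆ f '' Iic n) :
      c ((X.word m).map f) = e n f := by
    have hconst : ∀ i, n ≤ i → i < m → e i f = e n f := by
      intro i hi
      induction i, hi using Nat.le_induction with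
      | base => exact fun _ => rfl
      | succ i hi ih =>
        intro him
        rw [← ih (i.lt_succ_self.trans him)]
        exact (hX i f).2 <| image_mono (Iic_subset_Iic.mpr hi) <| hf ⟨_, him, rfl⟩
    obtain ⟨m, rfl⟩ := Nat.exists_eq_add_one_of_ne_zero hnm.ne_bot
    exact (hX m f).1.trans (hconst m (Nat.le_of_lt_succ hnm) m.lt_succ_self)
  refine ⟨X, fun {n m m' f g} hm hm' hfg hf hg => ?_⟩
  rw [hcolour hm hf, hcolour hm' hg]
  exact continuationColour_congr c (hq n).1.mem (fun a ha => (X.lt_of_mem_word n a ha).le) hfg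

/-- The sequence over `{0, …, j}` that begins with the word `w` and is constantly `j` from then
on. Letters of `w` above `j` are reduced modulo `j + 1`. -/
def padLast (j : ℕ) (w : List ℕ) (i : ℕ) : Fin (j + 1) := Fin.ofNat (j + 1) (w.getD i j)

theorem eqOn_padLast {j N : ℕ} {f : ℕ → ℕ} (hN : f N = j) :
    EqOn (Fin.ofNat (j + 1) ∘ f) (padLast j ((List.range N).map f)) (Iic N) := by
  intro i hi
  obtain hlt | rfl := (mem_Iic.mp hi).lt_or_eq
  · simp [padLast, hlt]
  · simp [padLast, hN]

theorem image_Iic_eq_univ {j N : ℕ} {f : ℕ → ℕ} (hN : f N = j) (hf : f '' Iio N = Iio j) :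
    (Fin.ofNat (j + 1) ∘ f) '' Iic N = univ := by
  refine eq_univ_of_forall fun a => ?_
  obtain ⟨i, hi, hia⟩ : a.1 ∈ f '' Iic N := by
    rw [← Iio_insert, image_insert_eq, hN, hf, Iio_insert]
    exact Nat.le_of_lt_succ a.2
  exact ⟨i, hi, by simp [hia]⟩

theorem exists_rigidSurj_colour_eq (c : List ℕ → κ) (j : ℕ) :
    ∃ (X : RigidSurj) (d : List ℕ → κ), ∀ {f : ℕ → ℕ} {n N : ℕ}, f '' Iio n = Iio (j + 1) →
      f N = j → f '' Iio N = Iio j → c ((X.word n).map f) = d ((List.range N).map f) := by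
  obtain ⟨X, hX⟩ := exists_rigidSurj_stabilizing fun w : List (Fin (j + 1)) => c (w.map Fin.val)
  refine ⟨X, fun w => c (((X.word (w.length + 1)).map (padLast j w)).map Fin.val),
    fun {f n N} hn hN hfN => ?_⟩
  have hNn : N < n := by
    obtain ⟨i, hi, hij⟩ : j ∈ f '' Iio n := hn ▸ j.lt_succ_self
    have : i ∉ Iio N := fun h => lt_irrefl j (hfN.subset ⟨i, h, hij⟩)
    exact (not_lt.mp this).trans_lt hi
  have hword : (X.word n).map f = ((X.word n).map (Fin.ofNat (j + 1) ∘ f)).map Fin.val := by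
    rw [List.map_map]
    refine List.map_congr_left fun a ha => ?_
    have : f a < j + 1 := hn.subset ⟨a, X.lt_of_mem_word n a ha, rfl⟩
    simp [Nat.mod_eq_of_lt this]
  have hpad := eqOn_padLast hN
  have huniv := image_Iic_eq_univ hN hfN
  simp only [hword, List.length_map, List.length_range]
  exact hX hNn N.lt_succ_self hpad (huniv ▸ subset_univ _)
    (hpad.image_eq ▸ huniv ▸ subset_univ _)

theorem exists_rigidSurj_monochromatic_words (c : List ℕ → κ) (j : ℕ) :
    ∃ X : RigidSurj, ∀ {f g : ℕ → ℕ} {n m : ℕ}, Rigid f → Rigid g →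
      f '' Iio n = Iio j → g '' Iio m = Iio j → c ((X.word n).map f) = c ((X.word m).map g) := by
  induction j generalizing c with
  | zero =>
    refine ⟨RigidSurj.id, fun {f g n m} _ _ hn hm => ?_⟩
    have : n = 0 := by simpa using hn
    have : m = 0 := by simpa using hm
    subst n m
    rfl
  | succ j ih =>
    obtain ⟨X, d, hXd⟩ := exists_rigidSurj_colour_eq c j
    obtain ⟨Y, hY⟩ := ih d
    have hcolour {f : ℕ → ℕ} {n N : ℕ} (hf : f '' Iio n = Iio (j + 1)) (hN : f N = j)
        (hfN : f '' Iio N = Iio j) :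
        c (((Y.comp X).word n).map f) = d ((Y.word N).map f) := by
      have hXf := hXd (f := f ∘ Y) (n := Y.first n) (N := Y.first N)
        (by rw [image_comp, Y.image_Iio_first, hf])
        (by rw [Function.comp_apply, Y.apply_first, hN])
        (by rw [image_comp, Y.image_Iio_first, hfN])
      rwa [← List.map_map, ← List.map_map, ← RigidSurj.word_comp] at hXf
    refine ⟨Y.comp X, fun {f g n m} hf hg hn hm => ?_⟩
    have hfirst {f : ℕ → ℕ} {n : ℕ} (hf : Rigid f) (hn : f '' Iio n = Iio (j + 1)) :
        ∃ N, f N = j ∧ f '' Iio N = Iio j := by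
      obtain ⟨i, -, rfl⟩ : j ∈ f '' Iio n := hn ▸ j.lt_succ_self
      exact hf.exists_image_Iio_eq i
    obtain ⟨N, hN, hfN⟩ := hfirst hf hn
    obtain ⟨M, hM, hgM⟩ := hfirst hg hm
    rw [hcolour hn hN hfN, hcolour hm hM hgM]
    exact hY hf hg hfN hgM

end WordTheorem

section SouslinOperation

variable {X : Type*}

/-- The part of the result of the Souslin operation that comes from the branches through `s`. -/
def souslinPart (A : List ℕ → Set X) (s : List ℕ) : Set X :=
  {y | ∃ x : ℕ → ℕ, (List.range s.length).map x = s ∧ ∀ n, y ∈ A ((List.range n).map x)}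

theorem souslinPart_subset (A : List ℕ → Set X) (s : List ℕ) : souslinPart A s ⊆ A s := by
  rintro y ⟨x, hx, hy⟩
  exact hx ▸ hy s.length

theorem souslinPart_subset_iUnion (A : List ℕ → Set X) (s : List ℕ) :
    souslinPart A s ⊆ ⋃ i, souslinPart A (s ++ [i]) := by
  rintro y ⟨x, hx, hy⟩
  refine mem_iUnion.mpr ⟨x s.length, x, ?_, hy⟩
  simp [List.range_succ, hx]

theorem souslinOp_subset_souslinPart_nil (A : List ℕ → Set X) :
    souslinOp A ⊆ souslinPart A [] := fun y hy => by
  obtain ⟨x, hx⟩ := mem_iUnion.mp hy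
  exact ⟨x, rfl, mem_iInter.mp hx⟩

theorem mem_souslinOp_of_forall_exists {A : List ℕ → Set X} {y : X} (hnil : y ∈ A [])
    (hstep : ∀ s, y ∈ A s → ∃ i, y ∈ A (s ++ [i])) : y ∈ souslinOp A := by
  choose! g hg using hstep
  let t (n : ℕ) : List ℕ := Nat.rec [] (fun _ s => s ++ [g s]) n
  have hyt (n : ℕ) : y ∈ A (t n) := by
    induction n with
    | zero => exact hnil
    | succ n ih => exact hg _ ih
  have ht (n : ℕ) : (List.range n).map (fun n => g (t n)) = t n := by
    induction n with
    | zero => rfl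
    | succ n ih => rw [List.range_succ, List.map_append, ih]; rfl
  exact mem_iUnion.mpr ⟨fun n => g (t n), mem_iInter.mpr fun n => (ht n).symm ▸ hyt n⟩

end SouslinOperation

section BaireCategory

variable {X : Type*} [TopologicalSpace X]

theorem exists_baireMeasurableSet_hull [SecondCountableTopology X] (S : Set X) :
    ∃ B, BaireMeasurableSet B ∧ S ≤ᶠ[residual X] B ∧
      ∀ C, BaireMeasurableSet C → S ≤ᶠ[residual X] C → B ≤ᶠ[residual X] C := by
  -- The hull is what is left after removing the basic open sets in which `S` is meagre.
  have hbasis := TopologicalSpace.isBasis_countableBasis X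
  let 𝒱 : Set (Set X) :=
    {V ∈ TopologicalSpace.countableBasis X | ∀ᶠ x in residual X, x ∈ S → x ∉ V}
  have h𝒱 : 𝒱.Countable := (TopologicalSpace.countable_countableBasis X).mono fun _ h => h.1
  have hopen : IsOpen (⋃₀ 𝒱) := isOpen_sUnion fun V hV => hbasis.isOpen hV.1
  refine ⟨(⋃₀ 𝒱)ᶜ, hopen.baireMeasurableSet.compl, ?_, fun C hC hSC => ?_⟩
  · filter_upwards [(eventually_countable_ball h𝒱).mpr fun V hV => hV.2] with x hx hxS
    rintro ⟨V, hV, hxV⟩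
    exact hx V hV hxS hxV
  obtain ⟨O, hO, hOC⟩ := (hopen.baireMeasurableSet.compl.diff hC).residualEq_isOpen
  have hO𝒱 : O ⊆ ⋃₀ 𝒱 := fun x hx => by
    obtain ⟨V, hV, hxV, hVO⟩ := hbasis.exists_subset_of_mem_open hx hO
    refine ⟨V, ⟨hV, ?_⟩, hxV⟩
    filter_upwards [hSC, hOC.mem_iff] with y hyC hyO hyS hyV
    exact (hyO.mpr (hVO hyV)).2 (hyC hyS)
  filter_upwards [hOC.mem_iff] with y hyO hy
  by_contra hyC
  exact hy (hO𝒱 (hyO.mp ⟨hy, hyC⟩))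

theorem baireMeasurableSet_souslinOp [SecondCountableTopology X] {A : List ℕ → Set X}
    (hA : ∀ s, BaireMeasurableSet (A s)) : BaireMeasurableSet (souslinOp A) := by
  choose H hH hsub hmin using fun s => exists_baireMeasurableSet_hull (souslinPart A s)
  let B (s : List ℕ) : Set X := H s ∩ A s
  have hB (s) : BaireMeasurableSet (B s) := (hH s).inter (hA s)
  have hpart (s) : souslinPart A s ≤ᶠ[residual X] B s := by
    filter_upwards [hsub s] with y hy hys
    exact ⟨hy hys, souslinPart_subset A s hys⟩
  have hcover (s) : H s ≤ᶠ[residual X] ⋃ i, B (s ++ [i]) :=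
    hmin s _ (.iUnion fun i => hB _) <|
      (souslinPart_subset_iUnion A s).eventuallyLE.trans
        (Filter.EventuallyLE.countable_iUnion fun i => hpart _)
  have hle : B [] ≤ᶠ[residual X] souslinOp A := by
    filter_upwards [eventually_countable_forall.mpr hcover] with y hy hnil
    have hyB : y ∈ souslinOp B :=
      mem_souslinOp_of_forall_exists hnil fun s hs => mem_iUnion.mp (hy s hs.1)
    exact iUnion_mono (fun x => iInter_mono fun n => inter_subset_right) hyB
  exact (hB []).congr <| hle.antisymm <|
    (souslinOp_subset_souslinPart_nil A).eventuallyLE.trans (hpart [])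

theorem SouslinMeasurable.baireMeasurableSet_preimage [SecondCountableTopology X] {Y : Type*}
    {t : TopologicalSpace Y} {S : Set Y} (hS : SouslinMeasurable t S) {φ : X → Y}
    (hφ : ∀ U, t.IsOpen U → BaireMeasurableSet (φ ⁻¹' U)) : BaireMeasurableSet (φ ⁻¹' S) := by
  refine hS {A | BaireMeasurableSet (φ ⁻¹' A)} hφ (fun A => .compl) (fun A hA B => .union hA)
    fun f hf => ?_
  have hpre : φ ⁻¹' souslinOp f = souslinOp fun s => φ ⁻¹' f s := by
    simp only [souslinOp, preimage_iUnion, preimage_iInter]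
  change BaireMeasurableSet (φ ⁻¹' souslinOp f)
  rw [hpre]
  exact baireMeasurableSet_souslinOp hf

end BaireCategory

section Cylinders

variable {A : Type*}

/-- The set of sequences that begin with the word `w`. -/
def cyl (w : List A) : Set (ℕ → A) := {g | (List.range w.length).map g = w}

theorem cyl_append_subset (w t : List A) : cyl (w ++ t) ⊆ cyl w := fun g hg => by
  have hg' : (List.range (w ++ t).length).map g = w ++ t := hg
  rw [List.length_append, List.range_add, List.map_append] at hg'
  exact (List.append_inj hg' (by simp)).1

theorem comp_mem_cyl (f : ℕ → A) (X : RigidSurj) (n : ℕ) : f ∘ X ∈ cyl ((X.word n).map f) := by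
  simp [cyl, RigidSurj.word]

theorem cyl_map_range (g : ℕ → A) (n : ℕ) : cyl ((List.range n).map g) = PiNat.cylinder g n := by
  ext x
  simp [cyl, PiNat.cylinder]

variable [TopologicalSpace A] [DiscreteTopology A]

theorem isOpen_cyl (w : List A) : IsOpen (cyl w) := by
  refine isOpen_iff_forall_mem_open.mpr fun g (hg : _ = w) => ?_
  refine ⟨_, ?_, PiNat.isOpen_cylinder _ g w.length, PiNat.self_mem_cylinder g _⟩
  rw [← cyl_map_range, hg]

theorem exists_cyl_append_subset {U : Set (ℕ → A)} (hU : IsOpen U) {w : List A} {g : ℕ → A}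
    (hgU : g ∈ U) (hgw : g ∈ cyl w) : ∃ t, cyl (w ++ t) ⊆ U := by
  obtain ⟨_, ⟨x, n, rfl⟩, hgx, hxU⟩ :=
    (PiNat.isTopologicalBasis_cylinders fun _ => A).exists_subset_of_mem_open hgU hU
  have hword : (List.range (w.length + n)).map g =
      w ++ (List.range n).map fun i => g (w.length + i) := by
    rw [List.range_add, List.map_append, List.map_map, hgw]
    rfl
  refine ⟨(List.range n).map fun i => g (w.length + i), ?_⟩
  rw [← hword, cyl_map_range]
  exact (PiNat.cylinder_anti g (Nat.le_add_left n _)).trans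
    (PiNat.mem_cylinder_iff_eq.mp hgx ▸ hxU)

theorem exists_mem_cyl_of_dense [Nonempty A] {G : Set (ℕ → A)} (hG : Dense G) (w : List A) :
    ∃ g ∈ G, g ∈ cyl w := by
  have hw : (cyl w).Nonempty := by
    inhabit A
    refine ⟨fun i => w.getD i default, List.ext_getElem (by simp) fun i _ hi => ?_⟩
    simp [hi]
  obtain ⟨g, hgw, hgG⟩ := hG.inter_open_nonempty _ (isOpen_cyl w) hw
  exact ⟨g, hgG, hgw⟩

end Cylinders

section BaireMeasurableColourings

theorem exists_append_forall {ι B : Type*} [Finite ι] {Q : ι → List B → Prop}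
    (hmono : ∀ i w t, Q i w → Q i (w ++ t)) (hdense : ∀ i w, ∃ t, Q i (w ++ t)) (w : List B) :
    ∃ t, ∀ i, Q i (w ++ t) := by
  classical
  have := Fintype.ofFinite ι
  suffices ∀ s : Finset ι, ∃ t, ∀ i ∈ s, Q i (w ++ t) by simpa using this Finset.univ
  intro s
  induction s using Finset.induction with
  | empty => exact ⟨[], by simp⟩
  | insert i s _ ih =>
    obtain ⟨t, ht⟩ := ih
    obtain ⟨u, hu⟩ := hdense i (w ++ t)
    refine ⟨t ++ u, fun j hj => ?_⟩
    rw [← List.append_assoc]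
    obtain rfl | hj := Finset.mem_insert.mp hj
    · exact hu
    · exact hmono j _ u (ht j hj)

variable {A : Type*} [Finite A]

theorem exists_rigidSurj_forall_word_map {P : ℕ → List A → Prop}
    (hmono : ∀ n w t, P n w → P n (w ++ t)) (hdense : ∀ n w, ∃ t, P n (w ++ t)) :
    ∃ X : RigidSurj, ∀ n (f : ℕ → A), f '' Iic n = univ → P n ((X.word (n + 1)).map f) := by
  refine exists_rigidSurj_forall_word
    (R := fun n _ w' => ∀ f : ℕ → A, f '' Iic n = univ → P n (w'.map f)) fun n w hw => ?_
  lift w to List (Iic n) using fun a ha => (hw a ha).le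
  obtain ⟨v, hv⟩ := exists_append_forall (B := Iic n)
    (Q := fun (f : {f : Iic n → A // f.Surjective}) w => P n (w.map f.1))
    (fun f w t hw => List.map_append ▸ hmono n _ _ hw)
    (fun f w => by
      obtain ⟨t, ht⟩ := hdense n (w.map f.1)
      obtain ⟨t, rfl⟩ := List.map_surjective_iff.mpr f.2 t
      exact ⟨t, List.map_append ▸ ht⟩)
    (w ++ [⟨n, self_mem_Iic⟩])
  refine ⟨v.map Subtype.val, by simp +contextual, fun f hf => ?_⟩
  have hsurj : (fun i : Iic n => f i).Surjective := fun a => by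
    obtain ⟨i, hi, rfl⟩ := hf.symm.subset (mem_univ a)
    exact ⟨⟨i, hi⟩, rfl⟩
  simpa [Function.comp_def] using hv ⟨_, hsurj⟩

theorem exists_eventually_forall_eq_iff_mem {X : Type*} [TopologicalSpace X] {κ : Type*}
    [Countable κ] {C : X → κ} (hC : ∀ i, BaireMeasurableSet (C ⁻¹' {i})) :
    ∃ O : κ → Set X, (∀ i, IsOpen (O i)) ∧ ∀ᶠ x in residual X, ∀ i, C x = i ↔ x ∈ O i := by
  choose O hO hCO using fun i => (hC i).residualEq_isOpen
  exact ⟨O, hO, eventually_countable_forall.mpr fun i => (hCO i).mem_iff⟩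

theorem exists_rigidSurj_comp_eq_comp [TopologicalSpace A] [DiscreteTopology A] {κ : Type*}
    [Countable κ] {C : (ℕ → A) → κ} (hC : ∀ i, BaireMeasurableSet (C ⁻¹' {i})) :
    ∃ X : RigidSurj, ∀ {n} {f g : ℕ → A}, f '' Iic n = univ → EqOn f g (Iic n) →
      C (f ∘ X) = C (g ∘ X) := by
  obtain hA | hA := isEmpty_or_nonempty A
  · exact ⟨RigidSurj.id, fun {n f} => isEmptyElim (f 0)⟩
  obtain ⟨O, hO, hCO⟩ := exists_eventually_forall_eq_iff_mem hC
  obtain ⟨G, hGO, hG, hGdense⟩ := mem_residual.mp hCO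
  obtain ⟨T, hT, rfl⟩ := hG.eq_iInter_nat
  have hopen (n : ℕ) (i : κ) : IsOpen (O i ∩ ⋂ m ∈ Iic n, T m) :=
    (hO i).inter ((finite_Iic n).isOpen_biInter fun m _ => hT m)
  have hdense (n : ℕ) (w : List A) : ∃ t i, cyl (w ++ t) ⊆ O i ∩ ⋂ m ∈ Iic n, T m := by
    obtain ⟨x, hxT, hxw⟩ := exists_mem_cyl_of_dense hGdense w
    obtain ⟨t, ht⟩ := exists_cyl_append_subset (hopen n (C x))
      ⟨(hGO hxT _).mp rfl, mem_iInter₂.mpr fun m _ => mem_iInter.mp hxT m⟩ hxw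
    exact ⟨t, C x, ht⟩
  obtain ⟨X, hX⟩ := exists_rigidSurj_forall_word_map
    (P := fun n w => ∃ i, cyl w ⊆ O i ∩ ⋂ m ∈ Iic n, T m)
    (fun n w t ⟨i, hi⟩ => ⟨i, (cyl_append_subset w t).trans hi⟩) hdense
  have hcolour {n : ℕ} {f : ℕ → A} (hf : f '' Iic n = univ) (i : κ) :
      C (f ∘ X) = i ↔ f ∘ X ∈ O i := by
    refine hGO (mem_iInter.mpr fun m => ?_) i
    obtain ⟨_, hi⟩ := hX (max n m) f <| univ_subset_iff.mp <|
      hf.superset.trans (image_mono (Iic_subset_Iic.mpr (le_max_left n m)))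
    exact mem_iInter₂.mp (hi (comp_mem_cyl f X _)).2 m (le_max_right n m)
  refine ⟨X, fun {n f g} hf hfg => ?_⟩
  obtain ⟨i, hi⟩ := hX n f hf
  have hword : (X.word (n + 1)).map f = (X.word (n + 1)).map g :=
    map_congr_of_eqOn_Iic hfg fun a ha => Nat.le_of_lt_succ (X.lt_of_mem_word _ a ha)
  rw [(hcolour hf i).mpr (hi (comp_mem_cyl f X _)).1,
    (hcolour (hfg.image_eq ▸ hf) i).mpr (hi (hword ▸ comp_mem_cyl g X _)).1]

theorem Rigid.val {k : ℕ} {f : ℕ → Fin k} (hf : Rigid f) : Rigid (Fin.val ∘ f) := fun i a ha => by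
  obtain ⟨i', hi', heq⟩ := hf i ⟨a, ha.trans (f i).2⟩ ha
  exact ⟨i', hi', congrArg Fin.val heq⟩

theorem Rigid.exists_eq_last {j : ℕ} {f : ℕ → Fin (j + 1)} (hf : Rigid f) (hsurj : f.Surjective) :
    ∃ n, f n = Fin.last j ∧ (Fin.val ∘ f) '' Iio n = Iio j := by
  obtain ⟨i, hi⟩ := hsurj (Fin.last j)
  obtain ⟨n, hn, hfn⟩ := hf.exists_image_Iio_eq i
  rw [hi] at hn hfn
  refine ⟨n, hn, ?_⟩
  rw [image_comp, hfn]
  ext a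
  simp

theorem exists_rigidSurj_monochromatic {k : ℕ} {κ : Type*} [Finite κ] {C : (ℕ → Fin k) → κ}
    (hC : ∀ i, BaireMeasurableSet (C ⁻¹' {i})) :
    ∃ X : RigidSurj, ∀ {f g : ℕ → Fin k}, Rigid f → Rigid g → f.Surjective → g.Surjective →
      C (f ∘ X) = C (g ∘ X) := by
  obtain _ | j := k
  · exact ⟨RigidSurj.id, fun {f} => (f 0).elim0⟩
  obtain ⟨X, hX⟩ := exists_rigidSurj_comp_eq_comp hC
  obtain ⟨Y, hY⟩ := exists_rigidSurj_monochromatic_words (fun w => C (padLast j w ∘ X)) j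
  have hcolour {f : ℕ → Fin (j + 1)} {n : ℕ} (hn : f n = Fin.last j)
      (hfn : (Fin.val ∘ f) '' Iio n = Iio j) :
      C (f ∘ Y.comp X) = C (padLast j ((Y.word n).map (Fin.val ∘ f)) ∘ X) := by
    have hlast : (Fin.val ∘ f ∘ Y) (Y.first n) = j := by simp [Y.apply_first, hn]
    have himage : (Fin.val ∘ f ∘ Y) '' Iio (Y.first n) = Iio j := by
      rw [← Function.comp_assoc, image_comp, Y.image_Iio_first, hfn]
    have hmod : Fin.ofNat (j + 1) ∘ Fin.val ∘ f ∘ Y = f ∘ Y := by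
      ext i
      simp
    rw [RigidSurj.word, List.map_map]
    exact hX (hmod ▸ image_Iic_eq_univ hlast himage) (hmod ▸ eqOn_padLast hlast)
  refine ⟨Y.comp X, fun {f g} hf hg hfsurj hgsurj => ?_⟩
  obtain ⟨n, hn, hfn⟩ := hf.exists_eq_last hfsurj
  obtain ⟨m, hm, hgm⟩ := hg.exists_eq_last hgsurj
  rw [hcolour hn hfn, hcolour hm hgm]
  exact hY hf.val hg.val hfn hgm

end BaireMeasurableColourings

section EquivalenceRelations

theorem classes_eq_setoidClasses {α : Type*} (E : Setoid α) : classes E = E.classes := by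
  ext C
  simp only [classes, Setoid.classes, mem_ofPred_eq, Setoid.comm' E]

theorem nonempty_classes_ker_equiv_range {α β : Type*} (f : α → β) :
    Nonempty (classes (Setoid.ker f) ≃ range f) :=
  ⟨(Equiv.setCongr (classes_eq_setoidClasses _)).trans <|
    (Setoid.quotientEquivClasses _).symm.trans (Setoid.quotientKerEquivRange f)⟩

theorem ker_mem_Ek {k : ℕ} {f : ℕ → Fin k} (hf : f.Surjective) : Setoid.ker f ∈ Ek k := by
  obtain ⟨e⟩ := nonempty_classes_ker_equiv_range f
  refine ⟨e.finite_iff.mpr inferInstance, ?_⟩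
  rw [← Nat.card_coe_set_eq, Nat.card_congr e, Nat.card_coe_set_eq, hf.range_eq, ncard_univ,
    Nat.card_eq_fintype_card, Fintype.card_fin]

theorem RigidSurj.ker_mem_Einf (X : RigidSurj) : Setoid.ker X ∈ Einf := by
  obtain ⟨e⟩ := nonempty_classes_ker_equiv_range X
  refine infinite_coe_iff.mp (e.infinite_iff.mpr ?_)
  rw [X.surjective.range_eq]
  exact infinite_univ.to_subtype

theorem exists_ker_eq_of_le_of_idempotent (E : Setoid ℕ) :
    ∃ r : ℕ → ℕ, E = Setoid.ker r ∧ (∀ i, r i ≤ i) ∧ ∀ i, r (r i) = r i := by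
  classical
  have hex (i : ℕ) : ∃ j, E j i := ⟨i, E.refl i⟩
  let r (i : ℕ) : ℕ := Nat.find (hex i)
  have hr (i : ℕ) : E (r i) i := Nat.find_spec (hex i)
  have hcongr {i j : ℕ} (h : E i j) : r i = r j :=
    Nat.find_congr' fun {n} => ⟨fun hn => E.trans hn h, fun hn => E.trans hn (E.symm h)⟩
  refine ⟨r, Setoid.ext fun i j => ⟨hcongr, fun h => ?_⟩, fun i => ?_, fun i => hcongr (hr i)⟩
  · exact E.trans (E.symm (hr i)) ((h : r i = r j) ▸ hr j)
  · exact Nat.find_min' (hex i) (E.refl i)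

theorem exists_rigid_ker_eq {k : ℕ} {Y : Setoid ℕ} (hY : Y ∈ Ek k) :
    ∃ f : ℕ → Fin k, Rigid f ∧ f.Surjective ∧ Y = Setoid.ker f := by
  obtain ⟨r, rfl, hle, hidem⟩ := exists_ker_eq_of_le_of_idempotent Y
  obtain ⟨e⟩ := nonempty_classes_ker_equiv_range r
  have hfin : (range r).Finite := e.finite_iff.mp hY.1
  have hcard : hfin.toFinset.card = k := by
    rw [← ncard_eq_toFinset_card _ hfin, ← Nat.card_coe_set_eq, ← Nat.card_congr e,
      Nat.card_coe_set_eq, hY.2]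
  let o : Fin k ≃o hfin.toFinset := hfin.toFinset.orderIsoOfFin hcard
  let f (i : ℕ) : Fin k := o.symm ⟨r i, hfin.mem_toFinset.mpr ⟨i, rfl⟩⟩
  have hf (a : Fin k) : f (o a) = a := by
    obtain ⟨j, hj⟩ := hfin.mem_toFinset.mp (o a).2
    refine o.symm_apply_eq.mpr (Subtype.ext ?_)
    simp only [← hj, hidem]
  refine ⟨f, fun i a ha => ⟨o a, ?_, hf a⟩, fun a => ⟨_, hf a⟩, ?_⟩
  · exact (Subtype.coe_lt_coe.mpr (o.lt_symm_apply.mp ha)).trans_le (hle i)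
  · ext i j
    simp [f, Setoid.ker_def]

theorem RigidSurj.exists_ker_comp_eq {k : ℕ} {Y : Setoid ℕ} (hY : Y ∈ Ek k) (X : RigidSurj)
    (hYX : Coarsens Y (Setoid.ker X)) :
    ∃ g : ℕ → Fin k, Rigid g ∧ g.Surjective ∧ Y = Setoid.ker (g ∘ X) := by
  obtain ⟨f, hf, hsurj, rfl⟩ := exists_rigid_ker_eq hY
  have hfactor (i : ℕ) : f (X.first (X i)) = f i := hYX _ _ (X.apply_first (X i))
  refine ⟨f ∘ X.first, fun i a ha => ?_, fun a => ?_, ?_⟩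
  · obtain ⟨i', hi', rfl⟩ := hf _ a ha
    exact ⟨X i', X.lt_of_lt hi', hfactor i'⟩
  · obtain ⟨i, rfl⟩ := hsurj a
    exact ⟨X i, hfactor i⟩
  · exact congrArg Setoid.ker (funext fun i => (hfactor i).symm)

open Classical in
/-- The kernel of a surjection onto `k` points, as a point of `𝓔_k`. Sequences that are not
surjective are sent to an arbitrary point. -/
noncomputable def kerEk {k : ℕ} [Nonempty (Ek k)] (g : ℕ → Fin k) : Ek k :=
  if hg : g.Surjective then ⟨Setoid.ker g, ker_mem_Ek hg⟩ else Classical.arbitrary _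

theorem continuous_graphMap_ker {α A : Type*} [TopologicalSpace A] [DiscreteTopology A] :
    Continuous fun g : α → A => graphMap (Setoid.ker g) := by
  classical
  refine continuous_pi fun q => ?_
  have hpair : Continuous fun g : α → A => (g q.1, g q.2) := by fun_prop
  have heq : Continuous fun z : A × A => decide (z.1 = z.2) := continuous_of_discreteTopology
  convert heq.comp hpair using 2 with g
  simp only [graphMap, Function.comp]
  congr

theorem isOpen_setOf_surjective {α A : Type*} [Finite A] [TopologicalSpace A]
    [DiscreteTopology A] : IsOpen {g : α → A | g.Surjective} := by
  have : {g : α → A | g.Surjective} = ⋂ a, ⋃ i, (fun g => g i) ⁻¹' {a} := by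
    ext g
    simp [Function.Surjective]
  rw [this]
  exact isOpen_iInter_of_finite fun a => isOpen_iUnion fun i =>
    (isOpen_discrete {a}).preimage (continuous_apply i)

theorem kerEk_of_surjective {k : ℕ} [Nonempty (Ek k)] {g : ℕ → Fin k} (hg : g.Surjective) :
    kerEk g = ⟨Setoid.ker g, ker_mem_Ek hg⟩ :=
  dif_pos hg

open Classical in
theorem graphMap_kerEk {k : ℕ} [Nonempty (Ek k)] :
    (fun g : ℕ → Fin k => graphMap (kerEk g).1) =
      {g | g.Surjective}.piecewise (fun g => graphMap (Setoid.ker g))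
        fun _ => graphMap (Classical.arbitrary (Ek k)).1 := by
  ext1 g
  by_cases hg : g.Surjective
  · rw [piecewise_eq_of_mem _ _ _ hg, kerEk_of_surjective hg]
  · rw [piecewise_eq_of_notMem _ _ _ hg, kerEk, dif_neg hg]

theorem baireMeasurableSet_kerEk_preimage {k : ℕ} [Nonempty (Ek k)] {U : Set (Ek k)}
    (hU : (graphTop (Ek k)).IsOpen U) : BaireMeasurableSet (kerEk ⁻¹' U) := by
  obtain ⟨V, hV, rfl⟩ := hU
  have hsurj : IsOpen {g : ℕ → Fin k | g.Surjective} := isOpen_setOf_surjective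
  rw [← preimage_comp, Function.comp_def, graphMap_kerEk, piecewise_preimage, Set.ite]
  exact ((hV.preimage continuous_graphMap_ker).inter hsurj).baireMeasurableSet.union <|
    (hV.preimage continuous_const).baireMeasurableSet.diff hsurj.baireMeasurableSet

end EquivalenceRelations

/-- **Dual Ramsey theorem** (Carlson–Simpson; Souslin measurable form).
For every `k < ω` and every finite Souslin measurable colouring `c` of `𝓔_k`
(with the topology inherited from `2^(ω×ω)`), there is `X ∈ 𝓔_∞` such that `c` is
constant on `𝓔_k ↾ X`, the set of members of `𝓔_k` that are coarsenings of `X`. -/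
theorem dualRamsey (k m : ℕ) (c : ↥(Ek k) → Fin m)
    (hc : ∀ i : Fin m, SouslinMeasurable (graphTop (Ek k)) {E | c E = i}) :
    ∃ X ∈ Einf, ∀ Y Z : ↥(Ek k),
      Coarsens Y.1 X → Coarsens Z.1 X → c Y = c Z := by
  obtain _ | _ := isEmpty_or_nonempty (Ek k)
  · exact ⟨_, RigidSurj.id.ker_mem_Einf, isEmptyElim⟩
  have hC (i : Fin m) : BaireMeasurableSet ((c ∘ kerEk) ⁻¹' {i}) :=
    (hc i).baireMeasurableSet_preimage fun _ => baireMeasurableSet_kerEk_preimage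
  obtain ⟨X, hX⟩ := exists_rigidSurj_monochromatic hC
  have hker (E : Ek k) (hE : Coarsens E.1 (Setoid.ker X)) :
      ∃ g : ℕ → Fin k, Rigid g ∧ g.Surjective ∧ kerEk (g ∘ X) = E := by
    obtain ⟨g, hg, hsurj, hEg⟩ := X.exists_ker_comp_eq E.2 hE
    exact ⟨g, hg, hsurj,
      (kerEk_of_surjective (hsurj.comp X.surjective)).trans (Subtype.ext hEg.symm)⟩
  refine ⟨_, X.ker_mem_Einf, fun Y Z hY hZ => ?_⟩
  obtain ⟨f, hf, hfsurj, rfl⟩ := hker Y hY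
  obtain ⟨g, hg, hgsurj, rfl⟩ := hker Z hZ
  exact hX hf hg hfsurj hgsurj

end DualRamsey
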